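/- If ℓ is congruent to −m modulo 3, then N_ℓ ∈ {0, 9}, and N_ℓ = 9 if and only if D_n(a) = 0, where n := ⌊(q+1)/3⌋. -/

import Mathlib

open Polynomial

local notation "K" => AlgebraicClosure (ZMod 2)

/-!
In characteristic `2` put `Φ x = x ^ (2 * q ^ ℓ)` and `σ x = x ^ q`. The roots to be counted are the
points of `F_{q³}` at which `Φ` agrees with the Möbius transformation `x ↦ -(x + a) / x`. Möbius
transformations preserve cross-ratios, so `Φ` fixes every cross-ratio of four roots; conversely,
once three roots in `F_{q³}` are known, the elements of `F_{q³}` fixed by `Φ` are, without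
repetition, the cross-ratios with them of all roots but the one sent to `∞`. As `ℓ ≡ -m (mod 3)`,
these elements form the field with `8` elements, whence `8 + 1` roots.

If `x ∈ F_{q³}` is a root, then so are `σ x` and `σ (σ x)`, and the root whose cross-ratio with
these three is a suitable element of the field with `8` elements is fixed by `σ`. On `F_q` the
equation reads `r ^ 3 + r + a = 0`, so there is a root at all if and only if this cubic has a root
in `F_q`. By the trace condition, one root of the cubic in `F_q` forces all three to lie in `F_q`.
Finally, `r = v + v⁻¹` turns the cubic into `a = v ^ 3 + (v ^ 3)⁻¹`, so that `D_n(a) = 0` means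
`v ^ (3 * n) = 1`. Here `3 * n` is `q - 1` or `q + 1`, and the trace condition makes `v ^ q` equal
to `v` or `v⁻¹` accordingly.
-/

section CrossRatio

variable {E F : Type*} [Field E] [Field F] {x₀ x₁ x₂ y z : F}

/-- The cross-ratio, as the coordinate on the projective line that sends `x₀`, `x₁`, `x₂` to
`0`, `∞`, `1`; the pole at `x₁` takes the junk value `0`. -/
def crossRatio (x₀ x₁ x₂ z : F) : F :=
  (z - x₀) * (x₂ - x₁) / ((z - x₁) * (x₂ - x₀))

lemma map_crossRatio (φ : F →+* E) :
    φ (crossRatio x₀ x₁ x₂ z) = crossRatio (φ x₀) (φ x₁) (φ x₂) (φ z) := by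
  simp [crossRatio]

lemma crossRatio_eq_iff (h₂₀ : x₂ ≠ x₀) (hz : z ≠ x₁) :
    crossRatio x₀ x₁ x₂ z = y ↔ (z - x₀) * (x₂ - x₁) = y * ((z - x₁) * (x₂ - x₀)) :=
  div_eq_iff (mul_ne_zero (sub_ne_zero.2 hz) (sub_ne_zero.2 h₂₀))

lemma injOn_crossRatio (h₀₁ : x₀ ≠ x₁) (h₂₀ : x₂ ≠ x₀) (h₂₁ : x₂ ≠ x₁) :
    Set.InjOn (crossRatio x₀ x₁ x₂) {x₁}ᶜ := by
  intro z hz w hw h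
  rw [crossRatio_eq_iff h₂₀ hz, crossRatio, div_mul_eq_mul_div,
    eq_div_iff (mul_ne_zero (sub_ne_zero.2 hw) (sub_ne_zero.2 h₂₀))] at h
  have hprod : (x₀ - x₁) * (x₂ - x₁) * (x₂ - x₀) * (z - w) = 0 := by linear_combination h
  simpa [sub_eq_zero, h₀₁, h₂₀, h₂₁] using hprod

lemma exists_crossRatio_eq (h₀₁ : x₀ ≠ x₁) (h₂₀ : x₂ ≠ x₀) (h₂₁ : x₂ ≠ x₁)
    (hy : y * (x₂ - x₀) ≠ x₂ - x₁) : ∃ z, z ≠ x₁ ∧ crossRatio x₀ x₁ x₂ z = y := by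
  have hden : x₂ - x₁ - y * (x₂ - x₀) ≠ 0 := sub_ne_zero.2 hy.symm
  have hz : (x₀ * (x₂ - x₁) - y * x₁ * (x₂ - x₀)) / (x₂ - x₁ - y * (x₂ - x₀)) ≠ x₁ := by
    rw [Ne, div_eq_iff hden]
    intro h
    have hprod : (x₀ - x₁) * (x₂ - x₁) = 0 := by linear_combination h
    simp [sub_eq_zero, h₀₁, h₂₁] at hprod
  refine ⟨_, hz, (crossRatio_eq_iff h₂₀ hz).2 ?_⟩
  field_simp
  ring

lemma crossRatio_rotate (h₂₀ : x₂ ≠ x₀) (hz : z ≠ x₁) :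
    crossRatio x₁ x₂ x₀ z = (1 - crossRatio x₀ x₁ x₂ z)⁻¹ := by
  have hcompl : 1 - crossRatio x₀ x₁ x₂ z =
      (z - x₂) * (x₀ - x₁) / ((z - x₁) * (x₀ - x₂)) := by
    have := sub_ne_zero.2 hz
    have := sub_ne_zero.2 h₂₀
    have := sub_ne_zero.2 h₂₀.symm
    rw [crossRatio]
    field_simp
    ring
  rw [hcompl, inv_div, crossRatio]

lemma map_eq_self_of_map_crossRatio_eq_self {φ : F →+* F}
    (h₀₁ : x₀ ≠ x₁) (h₂₀ : x₂ ≠ x₀) (h₂₁ : x₂ ≠ x₁)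
    (h₀ : φ x₀ = x₀) (h₁ : φ x₁ = x₁) (h₂ : φ x₂ = x₂) (hz : z ≠ x₁)
    (hfix : φ (crossRatio x₀ x₁ x₂ z) = crossRatio x₀ x₁ x₂ z) : φ z = z := by
  rw [map_crossRatio, h₀, h₁, h₂] at hfix
  refine injOn_crossRatio h₀₁ h₂₀ h₂₁ (fun hφz => hz ?_) hz hfix
  exact φ.injective (hφz.trans h₁.symm)

end CrossRatio

section TwistedRoots

open Function (fixedPoints)

variable {F : Type*} [Field F] {Φ : F →+* F} {a x x₀ x₁ x₂ y z : F}

/-- The roots of `Φ(X) * X + X + a`, where `Φ` is an endomorphism of the field. For `a ≠ 0` they are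
the points at which `Φ` agrees with the Möbius transformation `x ↦ -(x + a) / x`. -/
def twistedRoots (Φ : F →+* F) (a : F) : Set F :=
  {x | Φ x * x + x + a = 0}

lemma mem_twistedRoots : x ∈ twistedRoots Φ a ↔ Φ x * x + x + a = 0 :=
  Iff.rfl

lemma ne_zero_of_mem_twistedRoots (ha : a ≠ 0) (hx : x ∈ twistedRoots Φ a) : x ≠ 0 := by
  rintro rfl
  exact ha (by simpa [mem_twistedRoots] using hx)

lemma map_mem_twistedRoots {σ : F →+* F} (hcomm : Function.Commute Φ σ) (hσa : σ a = a)
    (hx : x ∈ twistedRoots Φ a) : σ x ∈ twistedRoots Φ a := by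
  rw [mem_twistedRoots, hcomm x, ← hσa, ← map_mul, ← map_add, ← map_add, mem_twistedRoots.1 hx,
    map_zero]

lemma map_sub_of_mem_twistedRoots (ha : a ≠ 0) (hx : x ∈ twistedRoots Φ a)
    (hz : z ∈ twistedRoots Φ a) : Φ (x - z) = a * (x - z) / (x * z) := by
  have hx0 := ne_zero_of_mem_twistedRoots ha hx
  have hz0 := ne_zero_of_mem_twistedRoots ha hz
  rw [mem_twistedRoots] at hx hz
  rw [map_sub, eq_div_iff (mul_ne_zero hx0 hz0)]
  linear_combination z * hx - x * hz

lemma map_crossRatio_of_mem_twistedRoots (ha : a ≠ 0) (h₀ : x₀ ∈ twistedRoots Φ a)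
    (h₁ : x₁ ∈ twistedRoots Φ a) (h₂ : x₂ ∈ twistedRoots Φ a) (hz : z ∈ twistedRoots Φ a) :
    Φ (crossRatio x₀ x₁ x₂ z) = crossRatio x₀ x₁ x₂ z := by
  have hscale : a ^ 2 / (x₀ * x₁ * x₂ * z) ≠ 0 := by
    simp [ha, ne_zero_of_mem_twistedRoots ha h₀, ne_zero_of_mem_twistedRoots ha h₁,
      ne_zero_of_mem_twistedRoots ha h₂, ne_zero_of_mem_twistedRoots ha hz]
  rw [crossRatio, map_div₀, map_mul, map_mul]
  simp only [map_sub_of_mem_twistedRoots ha, h₀, h₁, h₂, hz]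
  refine Eq.trans ?_ (mul_div_mul_left _ _ hscale)
  congr 1 <;> ring

lemma mem_twistedRoots_of_map_crossRatio_eq_self (ha : a ≠ 0) (h₀ : x₀ ∈ twistedRoots Φ a)
    (h₁ : x₁ ∈ twistedRoots Φ a) (h₂ : x₂ ∈ twistedRoots Φ a)
    (h₀₁ : x₀ ≠ x₁) (h₂₀ : x₂ ≠ x₀) (h₂₁ : x₂ ≠ x₁) (hz : z ≠ x₁)
    (hfix : Φ (crossRatio x₀ x₁ x₂ z) = crossRatio x₀ x₁ x₂ z) : z ∈ twistedRoots Φ a := by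
  have hx₀ := ne_zero_of_mem_twistedRoots ha h₀
  have hx₁ := ne_zero_of_mem_twistedRoots ha h₁
  have hx₂ := ne_zero_of_mem_twistedRoots ha h₂
  obtain ⟨y, hzy⟩ : ∃ y, crossRatio x₀ x₁ x₂ z = y := ⟨_, rfl⟩
  rw [hzy] at hfix
  rw [crossRatio_eq_iff h₂₀ hz] at hzy
  have hΦ : (Φ z * x₀ + x₀ + a) * (x₂ - x₁) = y * ((Φ z * x₁ + x₁ + a) * (x₂ - x₀)) := by
    have h := congrArg Φ hzy
    simp only [map_mul, hfix, map_sub_of_mem_twistedRoots ha h₂ h₁,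
      map_sub_of_mem_twistedRoots ha h₂ h₀] at h
    rw [map_sub, map_sub] at h
    field_simp at h
    rw [mem_twistedRoots] at h₀ h₁
    linear_combination h + (x₂ - x₁) * h₀ - y * (x₂ - x₀) * h₁
  have hprod : (x₂ - x₁) * (x₀ - x₁) * (Φ z * z + z + a) = 0 := by
    linear_combination (z - x₁) * hΦ - (Φ z * x₁ + x₁ + a) * hzy
  simpa [mem_twistedRoots, sub_eq_zero, h₀₁, h₂₁] using hprod

/- The only value that the cross-ratio could miss is the one at `∞`; that value is not fixed by `Φ`,
since `x ↦ -(x + a) / x` moves `∞`. -/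
lemma exists_mem_twistedRoots_crossRatio_eq (ha : a ≠ 0) (h₀ : x₀ ∈ twistedRoots Φ a)
    (h₁ : x₁ ∈ twistedRoots Φ a) (h₂ : x₂ ∈ twistedRoots Φ a)
    (h₀₁ : x₀ ≠ x₁) (h₂₀ : x₂ ≠ x₀) (h₂₁ : x₂ ≠ x₁) (hy : Φ y = y) :
    ∃ z ∈ twistedRoots Φ a, z ≠ x₁ ∧ crossRatio x₀ x₁ x₂ z = y := by
  have hx₀ := ne_zero_of_mem_twistedRoots ha h₀
  have hx₁ := ne_zero_of_mem_twistedRoots ha h₁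
  have hx₂ := ne_zero_of_mem_twistedRoots ha h₂
  have hfinite : y * (x₂ - x₀) ≠ x₂ - x₁ := by
    intro h
    have hΦ := congrArg Φ h
    rw [map_mul, hy, map_sub_of_mem_twistedRoots ha h₂ h₀,
      map_sub_of_mem_twistedRoots ha h₂ h₁] at hΦ
    field_simp at hΦ
    have hprod : (x₀ - x₁) * (x₂ - x₁) = 0 := by linear_combination x₁ * h - hΦ
    simp [sub_eq_zero, h₀₁, h₂₁] at hprod
  obtain ⟨z, hz, rfl⟩ := exists_crossRatio_eq h₀₁ h₂₀ h₂₁ hfinite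
  exact ⟨z, mem_twistedRoots_of_map_crossRatio_eq_self ha h₀ h₁ h₂ h₀₁ h₂₀ h₂₁ hz hy, hz, rfl⟩

lemma bijOn_crossRatio_twistedRoots {S : F →+* F} (ha : a ≠ 0)
    (h₀ : x₀ ∈ twistedRoots Φ a ∩ fixedPoints S) (h₁ : x₁ ∈ twistedRoots Φ a ∩ fixedPoints S)
    (h₂ : x₂ ∈ twistedRoots Φ a ∩ fixedPoints S)
    (h₀₁ : x₀ ≠ x₁) (h₂₀ : x₂ ≠ x₀) (h₂₁ : x₂ ≠ x₁) :
    Set.BijOn (crossRatio x₀ x₁ x₂) ((twistedRoots Φ a ∩ fixedPoints S) \ {x₁})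
      (fixedPoints Φ ∩ fixedPoints S) := by
  refine ⟨?_, (injOn_crossRatio h₀₁ h₂₀ h₂₁).mono fun z hz => hz.2, ?_⟩
  · rintro z ⟨⟨hz, hSz⟩, -⟩
    refine ⟨map_crossRatio_of_mem_twistedRoots ha h₀.1 h₁.1 h₂.1 hz, ?_⟩
    change S _ = _
    rw [map_crossRatio, h₀.2, h₁.2, h₂.2, hSz]
  · rintro y ⟨hΦy, hSy⟩
    obtain ⟨z, hz, hz₁, rfl⟩ :=
      exists_mem_twistedRoots_crossRatio_eq ha h₀.1 h₁.1 h₂.1 h₀₁ h₂₀ h₂₁ hΦy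
    have hSz : S z = z := map_eq_self_of_map_crossRatio_eq_self h₀₁ h₂₀ h₂₁ h₀.2 h₁.2 h₂.2 hz₁ hSy
    exact ⟨z, ⟨⟨hz, hSz⟩, hz₁⟩, rfl⟩

lemma encard_twistedRoots_inter_fixedPoints {S : F →+* F} (ha : a ≠ 0)
    (h₀ : x₀ ∈ twistedRoots Φ a ∩ fixedPoints S) (h₁ : x₁ ∈ twistedRoots Φ a ∩ fixedPoints S)
    (h₂ : x₂ ∈ twistedRoots Φ a ∩ fixedPoints S)
    (h₀₁ : x₀ ≠ x₁) (h₂₀ : x₂ ≠ x₀) (h₂₁ : x₂ ≠ x₁) :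
    (twistedRoots Φ a ∩ fixedPoints S).encard = (fixedPoints Φ ∩ fixedPoints S).encard + 1 := by
  have hbij := bijOn_crossRatio_twistedRoots ha h₀ h₁ h₂ h₀₁ h₂₀ h₂₁
  rw [← Set.encard_sdiff_singleton_add_one h₁, ← hbij.image_eq, hbij.injOn.encard_image]

/- The points `x`, `σ x`, `σ (σ x)` are permuted cyclically by `σ`, so `σ` fixes the point whose
cross-ratio `y` with them is transformed by `σ` as under that rotation. -/
lemma exists_mem_twistedRoots_map_eq_self {σ : F →+* F} (ha : a ≠ 0)
    (hcomm : Function.Commute Φ σ) (hσa : σ a = a) (hΦy : Φ y = y) (hσy : σ y * (1 - y) = 1)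
    (hx : x ∈ twistedRoots Φ a) (hσx : σ (σ (σ x)) = x) :
    ∃ z ∈ twistedRoots Φ a, σ z = z := by
  by_cases hfix : σ x = x
  · exact ⟨x, hx, hfix⟩
  have hx₁ := map_mem_twistedRoots hcomm hσa hx
  have hx₂ := map_mem_twistedRoots hcomm hσa hx₁
  have h₀₁ : x ≠ σ x := Ne.symm hfix
  have h₂₁ : σ (σ x) ≠ σ x := σ.injective.ne hfix
  have h₂₀ : σ (σ x) ≠ x := fun h => hfix (by rw [← h, hσx, h])
  obtain ⟨z, hz, hz₁, hzy⟩ :=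
    exists_mem_twistedRoots_crossRatio_eq ha hx hx₁ hx₂ h₀₁ h₂₀ h₂₁ hΦy
  have hz₂ : z ≠ σ (σ x) := by
    rintro rfl
    have hy1 : y = 1 := by
      rw [← hzy, crossRatio_eq_iff h₂₀ hz₁]
      ring
    simp [hy1] at hσy
  have hcross : crossRatio (σ x) (σ (σ x)) x (σ z) = crossRatio (σ x) (σ (σ x)) x z := by
    rw [crossRatio_rotate h₂₀ hz₁, hzy, ← eq_inv_of_mul_eq_one_left hσy, ← hzy, map_crossRatio, hσx]
  exact ⟨z, hz, injOn_crossRatio h₂₁.symm h₀₁ h₂₀.symm (σ.injective.ne hz₁) hz₂ hcross⟩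

end TwistedRoots

section Frobenius

open Function (fixedPoints)

lemma fixedPoints_iterateFrobenius_inter {R : Type*} [CommSemiring R] (p : ℕ) [ExpChar R p]
    (i j : ℕ) :
    fixedPoints (iterateFrobenius R p i) ∩ fixedPoints (iterateFrobenius R p j) =
      fixedPoints (iterateFrobenius R p (i.gcd j)) := by
  simp only [coe_iterateFrobenius]
  ext x
  exact ⟨fun h => Function.IsPeriodicPt.gcd h.1 h.2, fun h =>
    ⟨Function.IsPeriodicPt.trans_dvd h (Nat.gcd_dvd_left i j),
      Function.IsPeriodicPt.trans_dvd h (Nat.gcd_dvd_right i j)⟩⟩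

lemma encard_fixedPoints_iterateFrobenius {F : Type*} [Field F] [IsSepClosed F] (p : ℕ)
    [hp : Fact p.Prime] [CharP F p] {k : ℕ} (hk : k ≠ 0) :
    (fixedPoints (iterateFrobenius F p k)).encard = p ^ k := by
  have hsep : (X ^ p ^ k - X : F[X]).Separable := galois_poly_separable p _ (dvd_pow_self p hk)
  have hne := FiniteField.X_pow_card_pow_sub_X_ne_zero F hk hp.out.one_lt
  have hset : fixedPoints (iterateFrobenius F p k) = (X ^ p ^ k - X : F[X]).rootSet F := by
    ext x
    simp [mem_rootSet, hne, sub_eq_zero, Function.IsFixedPt, iterateFrobenius_def]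
  rw [hset, Set.encard_eq_coe_toFinset_card, Set.toFinset_card,
    card_rootSet_eq_natDegree hsep (IsSepClosed.splits_domain _ hsep),
    FiniteField.X_pow_card_pow_sub_X_natDegree_eq F hk hp.out.one_lt, Nat.cast_pow]

lemma pow_pow_add_mul_of_pow_pow_eq_self {M : Type*} [Monoid M] {p k : ℕ} {y : M}
    (hy : y ^ p ^ k = y) (i j : ℕ) : y ^ p ^ (j + k * i) = y ^ p ^ j := by
  have hiter : y ^ (p ^ k) ^ i = y := by
    have h := Function.IsFixedPt.iterate (f := fun x : M => x ^ p ^ k) hy i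
    rwa [pow_iterate] at h
  rw [pow_add, pow_mul p k, mul_comm, pow_mul, hiter]

variable {R : Type*} [CommRing R] (p : ℕ) [ExpChar R p] (m : ℕ)

/-- The absolute trace `x ↦ x + x ^ p + ⋯ + x ^ p ^ (m - 1)` of the field with `p ^ m` elements,
extended by this formula to any ring of characteristic `p`. -/
def absTrace : R →+ R :=
  ∑ i ∈ Finset.range m, (iterateFrobenius R p i : R →+ R)

lemma absTrace_apply (x : R) : absTrace p m x = ∑ i ∈ Finset.range m, x ^ p ^ i := by
  simp [absTrace, iterateFrobenius_def]

lemma absTrace_one : absTrace p m (1 : R) = m := by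
  simp [absTrace_apply]

lemma absTrace_pow_sub_self (x : R) : absTrace p m (x ^ p - x) = x ^ p ^ m - x := by
  rw [map_sub, absTrace_apply, absTrace_apply, ← Finset.sum_sub_distrib]
  simpa [← pow_mul, ← pow_succ'] using Finset.sum_range_sub (fun i => x ^ p ^ i) m

variable {p m}

lemma absTrace_pow {x : R} (hx : x ^ p ^ m = x) : absTrace p m (x ^ p) = absTrace p m x := by
  rw [← sub_eq_zero, ← map_sub, absTrace_pow_sub_self, hx, sub_self]

end Frobenius

section Cubic

variable {F : Type*} [Field F] [CharP F 2] {a r : F} {m : ℕ}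

lemma absTrace_inv_sq_of_cubic_root (ha : a ≠ 0) (hr : r ^ 3 + r + a = 0) (hrm : r ^ 2 ^ m = r) :
    absTrace 2 m (r⁻¹ ^ 2) = absTrace 2 m a⁻¹ := by
  have h2 : (2 : F) = 0 := CharTwo.two_eq_zero
  have hfactor : a = r * (r + 1) ^ 2 := by linear_combination hr - (r ^ 3 + r ^ 2 + r) * h2
  have hr0 : r ≠ 0 := by rintro rfl; simp_all
  have hr1 : r + 1 ≠ 0 := by intro h; simp_all
  have hpartial : a⁻¹ = r⁻¹ + ((r + 1)⁻¹ ^ 2 - (r + 1)⁻¹) := by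
    rw [hfactor]
    field_simp
    linear_combination -r * h2
  have hfix : (r + 1)⁻¹ ^ 2 ^ m = (r + 1)⁻¹ := by rw [inv_pow, add_pow_char_pow, hrm, one_pow]
  rw [hpartial, map_add, absTrace_pow_sub_self, hfix, sub_self, add_zero,
    absTrace_pow (by rw [inv_pow, hrm])]

variable [IsSepClosed F]

lemma exists_cubic_root_ne (ha : a ≠ 0) (htr : absTrace 2 m a⁻¹ = m)
    (hr : r ^ 3 + r + a = 0) (hrm : r ^ 2 ^ m = r) :
    ∃ s : F, s ^ 3 + s + a = 0 ∧ s ^ 2 ^ m = s ∧ s ≠ r := by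
  have h2 : (2 : F) = 0 := CharTwo.two_eq_zero
  have hr0 : r ≠ 0 := by rintro rfl; simp_all
  obtain ⟨w, hw⟩ := IsSepClosed.exists_root_C_mul_X_pow_add_C_mul_X_add_C' 2 2
    1 (-1) (-(1 + r⁻¹ ^ 2)) dvd_rfl le_rfl (neg_ne_zero.2 (one_ne_zero (α := F)))
  have hw' : w ^ 2 - w = 1 + r⁻¹ ^ 2 := by linear_combination hw
  have hwm : w ^ 2 ^ m = w := by
    rw [← sub_eq_zero, ← absTrace_pow_sub_self, hw', map_add, absTrace_one,
      absTrace_inv_sq_of_cubic_root ha hr hrm, htr, CharTwo.add_self_eq_zero]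
  have hwr : r ^ 2 * w ^ 2 - r ^ 2 * w = r ^ 2 + 1 := by
    linear_combination r ^ 2 * hw' + mul_inv_cancel₀ (pow_ne_zero 2 hr0)
  refine ⟨r * w, ?_, by rw [mul_pow, hrm, hwm], ?_⟩
  · linear_combination (r * w + r) * hwr + hr + (r ^ 3 * w + r * w) * h2
  · intro hrw
    have hw1 : w = 1 := by simpa [hr0] using hrw
    have hr1 : r ^ 2 = 1 := by
      rw [hw1] at hwr
      linear_combination -hwr - h2
    exact ha (by linear_combination hr - r * hr1 - r * h2)

end Cubic

section Dickson

variable {F : Type*} [Field F] [CharP F 2] {a r v : F} {m : ℕ}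

lemma three_mul_two_pow_add_one_div_three_of_even (hm : Even m) :
    3 * ((2 ^ m + 1) / 3) + 1 = 2 ^ m := by
  have hmod : 2 ^ m ≡ 1 [MOD 3] := by
    obtain ⟨k, rfl⟩ := hm
    simpa [← two_mul, pow_mul] using (show 2 ^ 2 ≡ 1 [MOD 3] by rfl).pow k
  rw [Nat.ModEq] at hmod
  lia

lemma three_mul_two_pow_add_one_div_three_of_odd (hm : Odd m) :
    3 * ((2 ^ m + 1) / 3) = 2 ^ m + 1 := by
  have hdvd : 2 + 1 ∣ 2 ^ m + 1 := by simpa using Odd.nat_add_dvd_pow_add_pow 2 1 hm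
  exact Nat.mul_div_cancel' hdvd

lemma eval_add_inv_dickson_eq_zero_iff {b : F} (hb : b ≠ 0) (n : ℕ) :
    (dickson 1 (1 : F) n).eval (b + b⁻¹) = 0 ↔ b ^ n = 1 := by
  rw [dickson_one_one_eval_add_inv b b⁻¹ (mul_inv_cancel₀ hb), CharTwo.add_eq_zero, inv_pow,
    ← mul_eq_one_iff_eq_inv₀ (pow_ne_zero n hb), ← sq, ← one_pow 2, CharTwo.sq_inj, one_pow]

-- The cast `m : F` is `0` or `1`, so the right-hand side is `v` for even `m` and `v⁻¹` for odd `m`.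
lemma pow_three_mul_two_pow_add_one_div_three_eq_one_iff (hv : v ≠ 0) :
    v ^ (3 * ((2 ^ m + 1) / 3)) = 1 ↔ v ^ 2 ^ m = v + m * (v + v⁻¹) := by
  rcases Nat.even_or_odd m with hm | hm
  · have hpow : v ^ 2 ^ m = v ^ (3 * ((2 ^ m + 1) / 3)) * v := by
      rw [← pow_succ, three_mul_two_pow_add_one_div_three_of_even hm]
    rw [CharTwo.natCast_eq_ite, if_pos hm, zero_mul, add_zero, hpow, mul_eq_right₀ hv]
  · rw [CharTwo.natCast_eq_ite, if_neg (Nat.not_even_iff_odd.2 hm), one_mul,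
      CharTwo.add_cancel_left, three_mul_two_pow_add_one_div_three_of_odd hm, pow_succ,
      mul_eq_one_iff_eq_inv₀ hv]

lemma add_inv_pow_two_pow_eq_self (h : v ^ 2 ^ m = v + m * (v + v⁻¹)) :
    (v + v⁻¹) ^ 2 ^ m = v + v⁻¹ := by
  rw [add_pow_char_pow, inv_pow, h]
  rcases CharTwo.natCast_cases (R := F) m with hm | hm
  · simp [hm]
  · rw [hm, one_mul, CharTwo.add_cancel_left, inv_inv, add_comm]

lemma pow_three_add_inv_pow_three (hv : v ≠ 0) :
    v ^ 3 + (v ^ 3)⁻¹ = (v + v⁻¹) ^ 3 + (v + v⁻¹) := by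
  have h2 : (2 : F) = 0 := CharTwo.two_eq_zero
  field_simp
  linear_combination -(2 * v ^ 4 + 2 * v ^ 2) * h2

lemma pow_two_pow_eq_of_cubic_root (ha : a ≠ 0) (htr : absTrace 2 m a⁻¹ = m) (hv : v ≠ 0)
    (hroot : (v + v⁻¹) ^ 3 + (v + v⁻¹) + a = 0) (hfix : (v + v⁻¹) ^ 2 ^ m = v + v⁻¹) :
    v ^ 2 ^ m = v + m * (v + v⁻¹) := by
  have h2 : (2 : F) = 0 := CharTwo.two_eq_zero
  have htrace := absTrace_inv_sq_of_cubic_root ha hroot hfix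
  have hr : v + v⁻¹ ≠ 0 := by intro h; simp_all
  obtain ⟨r, hvr⟩ : ∃ r, v + v⁻¹ = r := ⟨_, rfl⟩
  have hquad : v ^ 2 + 1 = v * r := by rw [← hvr]; field_simp
  rw [hvr] at htrace hfix hr ⊢
  have hdiv : (v / r) ^ 2 - v / r = r⁻¹ ^ 2 := by
    field_simp
    linear_combination hquad - h2
  have hAS := absTrace_pow_sub_self 2 m (v / r)
  rw [hdiv, htrace, htr, div_pow, hfix] at hAS
  field_simp at hAS
  linear_combination -hAS

variable [IsSepClosed F]

lemma exists_add_inv_eq (r : F) : ∃ v : F, v ≠ 0 ∧ v + v⁻¹ = r := by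
  rcases eq_or_ne r 0 with rfl | hr
  · exact ⟨1, one_ne_zero, by rw [inv_one, CharTwo.add_self_eq_zero]⟩
  obtain ⟨v, hv⟩ := IsSepClosed.exists_root_C_mul_X_pow_add_C_mul_X_add_C' 2 2
    1 (-r) 1 dvd_rfl le_rfl (neg_ne_zero.2 hr)
  have hv0 : v ≠ 0 := by rintro rfl; simp at hv
  refine ⟨v, hv0, ?_⟩
  field_simp
  linear_combination hv

theorem eval_dickson_eq_zero_iff_exists_cubic_root (ha : a ≠ 0) (htr : absTrace 2 m a⁻¹ = m) :
    (dickson 1 (1 : F) ((2 ^ m + 1) / 3)).eval a = 0 ↔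
      ∃ r : F, r ^ 3 + r + a = 0 ∧ r ^ 2 ^ m = r := by
  have : NeZero ((3 : ℕ) : F) :=
    ⟨by rw [CharTwo.natCast_eq_ite, if_neg (by decide)]; exact one_ne_zero⟩
  have eval_eq_zero_iff {v : F} (hv : v ≠ 0) (hav : v ^ 3 + (v ^ 3)⁻¹ = a) :
      (dickson 1 (1 : F) ((2 ^ m + 1) / 3)).eval a = 0 ↔ v ^ 2 ^ m = v + m * (v + v⁻¹) := by
    rw [← hav, eval_add_inv_dickson_eq_zero_iff (pow_ne_zero 3 hv), ← pow_mul,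
      pow_three_mul_two_pow_add_one_div_three_eq_one_iff hv]
  constructor
  · intro heval
    obtain ⟨b, hb, hba⟩ := exists_add_inv_eq a
    obtain ⟨v, rfl⟩ := IsSepClosed.exists_pow_nat_eq b 3
    have hv : v ≠ 0 := by rintro rfl; simp at hb
    refine ⟨v + v⁻¹, ?_, add_inv_pow_two_pow_eq_self ((eval_eq_zero_iff hv hba).1 heval)⟩
    rw [← pow_three_add_inv_pow_three hv, hba, CharTwo.add_self_eq_zero]
  · rintro ⟨r, hroot, hfix⟩
    obtain ⟨v, hv, rfl⟩ := exists_add_inv_eq r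
    have hav : v ^ 3 + (v ^ 3)⁻¹ = a := by
      rw [pow_three_add_inv_pow_three hv, ← CharTwo.add_eq_zero, hroot]
    exact (eval_eq_zero_iff hv hav).2 (pow_two_pow_eq_of_cubic_root ha htr hv hroot hfix)

end Dickson

section Counting

open Function (fixedPoints)

variable {F : Type*} [Field F] [CharP F 2] {a : F} {m ℓ : ℕ}

lemma mem_twistedRoots_iff_of_pow_eq_self {x : F} (hx : x ^ 2 ^ m = x) :
    x ∈ twistedRoots (iterateFrobenius F 2 (m * ℓ + 1)) a ↔ x ^ 3 + x + a = 0 := by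
  rw [mem_twistedRoots, iterateFrobenius_def, add_comm (m * ℓ),
    pow_pow_add_mul_of_pow_pow_eq_self hx, pow_one, ← pow_succ]

lemma gcd_mul_add_one_three_mul (hℓ : ¬ 3 ∣ ℓ) (hℓm : 3 ∣ ℓ + m) :
    (m * ℓ + 1).gcd (3 * m) = 3 := by
  have hdvd : 3 ∣ m * ℓ + 1 := by
    have hmod : ℓ % 3 = 1 ∧ m % 3 = 2 ∨ ℓ % 3 = 2 ∧ m % 3 = 1 := by lia
    rw [Nat.dvd_iff_mod_eq_zero]
    rcases hmod with ⟨hℓ, hm⟩ | ⟨hℓ, hm⟩ <;> simp [Nat.add_mod, Nat.mul_mod, hℓ, hm]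
  have hcoprime : m.Coprime (m * ℓ + 1) := by simp
  rw [hcoprime.gcd_mul_right_cancel_right, Nat.gcd_eq_right hdvd]

lemma setOf_root_eq_twistedRoots_inter_fixedPoints (m ℓ : ℕ) (a : F) :
    {x : F | x ^ (2 ^ m) ^ 3 = x ∧ x ^ (2 * (2 ^ m) ^ ℓ + 1) + x + a = 0} =
      twistedRoots (iterateFrobenius F 2 (m * ℓ + 1)) a ∩
        fixedPoints (iterateFrobenius F 2 (3 * m)) := by
  ext x
  have hq3 : (2 ^ m) ^ 3 = 2 ^ (3 * m) := by rw [← pow_mul, mul_comm]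
  have hqℓ : 2 * (2 ^ m) ^ ℓ = 2 ^ (m * ℓ + 1) := by rw [← pow_mul, pow_succ']
  rw [hq3, hqℓ, Set.inter_comm]
  simp [mem_twistedRoots, iterateFrobenius_def, Function.IsFixedPt, pow_succ]

variable [IsSepClosed F]

lemma exists_cubic_root_one : ∃ y : F, y ^ 3 + y + 1 = 0 := by
  have h2 : (2 : F[X]) = 0 := CharTwo.two_eq_zero
  have hsep : (X ^ 3 + X + 1 : F[X]).Separable := by
    refine ⟨1, X, ?_⟩
    simp only [derivative_add, derivative_X_pow, derivative_X, derivative_one, Nat.cast_ofNat,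
      map_ofNat]
    linear_combination (2 * X ^ 3 + X) * h2
  have hdeg : (X ^ 3 + X + 1 : F[X]).degree = 3 := by compute_degree!
  obtain ⟨y, hy⟩ := IsSepClosed.exists_root _ (by simp [hdeg]) hsep
  exact ⟨y, by simpa using hy⟩

lemma exists_pow_two_pow_mul_one_sub_eq_one (hm : ¬ 3 ∣ m) :
    ∃ y : F, y ^ 8 = y ∧ y ^ 2 ^ m * (1 - y) = 1 := by
  have pow_eq {y : F} (hy : y ^ 8 = y) : y ^ 2 ^ m = y ^ 2 ^ (m % 3) := by
    conv_lhs => rw [← Nat.mod_add_div m 3, pow_pow_add_mul_of_pow_pow_eq_self hy]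
  obtain ⟨y, hy⟩ := exists_cubic_root_one (F := F)
  have hcases : m % 3 = 1 ∨ m % 3 = 2 := by lia
  rcases hcases with hm1 | hm2
  · have hy8 : (y + 1) ^ 8 = y + 1 := by grind
    refine ⟨y + 1, hy8, ?_⟩
    rw [pow_eq hy8, hm1]
    grind
  · have hy8 : y ^ 8 = y := by grind
    refine ⟨y, hy8, ?_⟩
    rw [pow_eq hy8, hm2]
    grind

lemma encard_twistedRoots_inter_fixedPoints_eq_nine (ha : a ≠ 0) (htr : absTrace 2 m a⁻¹ = m)
    (hℓ : ¬ 3 ∣ ℓ) (hℓm : 3 ∣ ℓ + m) (hroot : ∃ r : F, r ^ 3 + r + a = 0 ∧ r ^ 2 ^ m = r) :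
    (twistedRoots (iterateFrobenius F 2 (m * ℓ + 1)) a ∩
      fixedPoints (iterateFrobenius F 2 (3 * m))).encard = 9 := by
  have h2 : (2 : F) = 0 := CharTwo.two_eq_zero
  have mem_inter {x : F} (hx : x ^ 3 + x + a = 0) (hxm : x ^ 2 ^ m = x) :
      x ∈ twistedRoots (iterateFrobenius F 2 (m * ℓ + 1)) a ∩
        fixedPoints (iterateFrobenius F 2 (3 * m)) := by
    refine ⟨(mem_twistedRoots_iff_of_pow_eq_self hxm).2 hx, ?_⟩
    change x ^ 2 ^ (3 * m) = x
    simpa [mul_comm 3] using pow_pow_add_mul_of_pow_pow_eq_self hxm 3 0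
  obtain ⟨r, hr, hrm⟩ := hroot
  obtain ⟨s, hs, hsm, hsr⟩ := exists_cubic_root_ne ha htr hr hrm
  have hr0 : r ≠ 0 := by rintro rfl; simp_all
  have hs0 : s ≠ 0 := by rintro rfl; simp_all
  have hrs : (r + s) ^ 3 + (r + s) + a = 0 := by
    have hquad : r ^ 2 + r * s + s ^ 2 + 1 = 0 := by
      apply mul_left_cancel₀ (sub_ne_zero.2 hsr)
      linear_combination hs - hr
    linear_combination hs - 2 * hr + 3 * r * hquad + a * h2
  have hrsm : (r + s) ^ 2 ^ m = r + s := by rw [add_pow_char_pow, hrm, hsm]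
  rw [encard_twistedRoots_inter_fixedPoints ha (mem_inter hr hrm) (mem_inter hs hsm)
      (mem_inter hrs hrsm) hsr.symm (by simpa using hs0) (by simpa using hr0),
    fixedPoints_iterateFrobenius_inter, gcd_mul_add_one_three_mul hℓ hℓm,
    encard_fixedPoints_iterateFrobenius 2 three_ne_zero]
  norm_num

lemma exists_cubic_root_of_mem_twistedRoots {x : F} (ha : a ≠ 0) (ham : a ^ 2 ^ m = a)
    (hℓ : ¬ 3 ∣ ℓ) (hℓm : 3 ∣ ℓ + m)
    (hx : x ∈ twistedRoots (iterateFrobenius F 2 (m * ℓ + 1)) a)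
    (hxm : x ∈ fixedPoints (iterateFrobenius F 2 (3 * m))) :
    ∃ r : F, r ^ 3 + r + a = 0 ∧ r ^ 2 ^ m = r := by
  obtain ⟨y, hy8, hy⟩ := exists_pow_two_pow_mul_one_sub_eq_one (F := F) (m := m) (by lia)
  have hΦy : y ∈ fixedPoints (iterateFrobenius F 2 (m * ℓ + 1)) ∩
      fixedPoints (iterateFrobenius F 2 (3 * m)) := by
    rw [fixedPoints_iterateFrobenius_inter, gcd_mul_add_one_three_mul hℓ hℓm]
    exact hy8
  have hcomm : Function.Commute (iterateFrobenius F 2 (m * ℓ + 1)) (iterateFrobenius F 2 m) :=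
    fun z => by simp only [iterateFrobenius_def, pow_right_comm]
  have hσ3 : iterateFrobenius F 2 m (iterateFrobenius F 2 m (iterateFrobenius F 2 m x)) = x := by
    rw [← iterateFrobenius_add_apply, ← iterateFrobenius_add_apply,
      show m + m + m = 3 * m by ring]
    exact hxm
  obtain ⟨r, hr, hrm⟩ := exists_mem_twistedRoots_map_eq_self ha hcomm ham hΦy.1 hy hx hσ3
  exact ⟨r, (mem_twistedRoots_iff_of_pow_eq_self hrm).1 hr, hrm⟩

end Counting

theorem roots_count_mem_zero_nine_iff_dickson_general {F : Type*} [Field F] [CharP F 2]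
    [IsSepClosed F] {m ℓ : ℕ} (hℓ3 : ¬ 3 ∣ ℓ) {q : ℕ} (hq : q = 2 ^ m) {n : ℕ}
    (hn : n = (q + 1) / 3) {a : F} (haq : a ^ q = a) (ha : a ≠ 0)
    (htr : ∑ i ∈ Finset.range m, a⁻¹ ^ 2 ^ i = (m : F)) (hcong : 3 ∣ ℓ + m) {N : ℕ}
    (hN : N = {x : F | x ^ q ^ 3 = x ∧ x ^ (2 * q ^ ℓ + 1) + x + a = 0}.ncard) :
    N ∈ ({0, 9} : Set ℕ) ∧ (N = 9 ↔ (dickson 1 (1 : F) n).eval a = 0) := by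
  subst hq hn
  rw [← absTrace_apply] at htr
  rw [setOf_root_eq_twistedRoots_inter_fixedPoints] at hN
  rw [eval_dickson_eq_zero_iff_exists_cubic_root ha htr]
  have eq_nine (hroot : ∃ r : F, r ^ 3 + r + a = 0 ∧ r ^ 2 ^ m = r) : N = 9 := by
    rw [hN, Set.ncard, encard_twistedRoots_inter_fixedPoints_eq_nine ha htr hℓ3 hcong hroot]
    rfl
  have exists_root (hN0 : N ≠ 0) : ∃ r : F, r ^ 3 + r + a = 0 ∧ r ^ 2 ^ m = r := by
    obtain ⟨x, hx, hxm⟩ := Set.nonempty_of_ncard_ne_zero (hN ▸ hN0)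
    exact exists_cubic_root_of_mem_twistedRoots ha haq hℓ3 hcong hx hxm
  refine ⟨?_, fun h9 => exists_root (by lia), eq_nine⟩
  exact (eq_or_ne N 0).imp_right fun hN0 => eq_nine (exists_root hN0)

/-- Theorem 1.1(2): if `ℓ ≡ -m (mod 3)` then the number `N` of roots in `F_{q³}` of
`X^(2q^ℓ+1) + X + a` is `0` or `9`, and `N = 9` iff `D_n(a) = 0` where `n = ⌊(q+1)/3⌋`. -/
theorem roots_count_mem_zero_nine_iff_dickson
    (m ℓ : ℕ) (hm : 0 < m) (hℓ : 0 < ℓ) (hℓ3 : ¬ 3 ∣ ℓ)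
    (q : ℕ) (hq : q = 2 ^ m) (n : ℕ) (hn : n = (q + 1) / 3)
    (a : K) (haq : a ^ q = a) (ha2 : a ^ 2 ≠ a)
    (htr : ∑ i ∈ Finset.range m, a⁻¹ ^ 2 ^ i = (m : K))
    (hcong : 3 ∣ (ℓ + m))
    (N : ℕ)
    (hN : N = {x : K | x ^ q ^ 3 = x ∧ x ^ (2 * q ^ ℓ + 1) + x + a = 0}.ncard) :
    N ∈ ({0, 9} : Set ℕ) ∧
      (N = 9 ↔ Polynomial.eval a (Polynomial.dickson 1 (1 : K) n) = 0) := by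
  have ha : a ≠ 0 := by rintro rfl; simp at ha2
  exact roots_count_mem_zero_nine_iff_dickson_general hℓ3 hq hn haq ha htr hcong hN
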